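/- The class of Boolean MSO queries on ordered unranked Σ-trees is precisely the class of Boolean queries defined by formulas of the modal μ-calculus L_μ over the two binary relations ≺_fc (first child) and ≺_ns (next sibling), where a sentence φ of L_μ defines the Boolean query { T : (T, ε) ⊨ φ }. -/

import Mathlib

/-!
Both directions go through the first-child/next-sibling binary tree of an unranked tree.

From MSO to the μ-calculus, an MSO formula is turned into a finite deterministic bottom-up automaton
on this binary tree, whose letters record the label of a node and its membership in the sets coding
a valuation (`MSO.exists_rec`).  Conjunction is the product construction (`Rec.and`), and set
quantification is the subset construction (`Rec.ex`), which works because the subtrees of the two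
successors of a node are disjoint.  First-order quantification is set quantification over
singletons (`Rec.singleton`).

The states of the automaton satisfy a system of guarded equations `X_q = body q X`: a node carries
`q` iff some transition into `q` fits its label and the states of its successors.  This system is
solved by nested least fixed points in the manner of Bekić (`stateForm`).  Since trees are finite
and the variables are guarded, the solution is unique, so the formula for `q` defines exactly the
nodes carrying `q` (`stateForm_sound`, `stateForm_complete`).

From the μ-calculus to MSO, the standard translation `MuForm.toMSO` expresses `μX.φ` by quantifying
over all sets closed under `φ`; first child and next sibling are definable from the descendant
relation and the sibling order (`MSO.sat_relForm`).
-/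

namespace UnrankedTrees

/-! ### Unranked trees: tree domains and ordered unranked Σ-trees.
Nodes are finite strings over ℕ; a tree domain is a finite prefix-closed set
of nodes such that `s ++ [i] ∈ D` implies `s ++ [j] ∈ D` for all `j < i`. -/

abbrev Node : Type := List ℕ

/-- An ordered unranked tree over alphabet `A`: a tree domain with a labeling. -/
structure UTree (A : Type) where
  dom : Finset Node
  nil_mem : ([] : Node) ∈ dom
  prefix_closed : ∀ ⦃s t : Node⦄, s ∈ dom → t <+: s → t ∈ dom
  sib_closed : ∀ ⦃s : Node⦄ ⦃i j : ℕ⦄, s ++ [i] ∈ dom → j < i → s ++ [j] ∈ dom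
  label : Node → A

namespace UTree

variable {A : Type}

/-- The child relation `≺_ch`. -/
def childR (T : UTree A) (s t : Node) : Prop :=
  s ∈ T.dom ∧ t ∈ T.dom ∧ ∃ i : ℕ, t = s ++ [i]

/-- The descendant-or-self relation `≺*_ch` (the prefix relation). -/
def descR (T : UTree A) (s t : Node) : Prop :=
  s ∈ T.dom ∧ t ∈ T.dom ∧ s <+: t

/-- The next-sibling relation `≺_ns`. -/
def nsR (T : UTree A) (s t : Node) : Prop :=
  s ∈ T.dom ∧ t ∈ T.dom ∧ ∃ (u : Node) (i : ℕ), s = u ++ [i] ∧ t = u ++ [i + 1]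

/-- The sibling ordering `≺*_ns` (reflexive-transitive closure of next-sibling). -/
def sibR (T : UTree A) (s t : Node) : Prop :=
  s ∈ T.dom ∧ t ∈ T.dom ∧ ∃ (u : Node) (i j : ℕ), s = u ++ [i] ∧ t = u ++ [j] ∧ i ≤ j

/-- The first-child relation `≺_fc`. -/
def firstChildR (T : UTree A) (s t : Node) : Prop :=
  s ∈ T.dom ∧ t ∈ T.dom ∧ t = s ++ [0]

/-- The number of children of a node. -/
noncomputable def childCount (T : UTree A) (s : Node) : ℕ :=
  Set.ncard {i : ℕ | s ++ [i] ∈ T.dom}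

/-- The list of children of a node `s`, in sibling order: `s·0, …, s·(n-1)`. -/
noncomputable def childrenList (T : UTree A) (s : Node) : List Node :=
  (List.range (T.childCount s)).map fun i => s ++ [i]

/-- `s` is a leaf of `T`. -/
def isLeaf (T : UTree A) (s : Node) : Prop :=
  s ∈ T.dom ∧ ∀ i : ℕ, s ++ [i] ∉ T.dom

/-- `s` has no next sibling in `T` (the root also counts as "last"). -/
def isLast (T : UTree A) (s : Node) : Prop :=
  s = [] ∨ ∃ (u : Node) (i : ℕ), s = u ++ [i] ∧ u ++ [i + 1] ∉ T.dom

end UTree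

/-! ### MSO over ordered unranked trees.
First-order variables and monadic second-order variables are indexed by ℕ.
First-order quantifiers range over the nodes of the tree, set quantifiers over
sets of nodes of the tree. -/

inductive MSO (A : Type) : Type where
  | eq : ℕ → ℕ → MSO A
  | desc : ℕ → ℕ → MSO A               -- x ≺*_ch y
  | sib : ℕ → ℕ → MSO A                -- x ≺*_ns y
  | lab : A → ℕ → MSO A                -- P_a(x)
  | mem : ℕ → ℕ → MSO A                -- X(x)
  | not : MSO A → MSO A
  | and : MSO A → MSO A → MSO A
  | exFO : ℕ → MSO A → MSO A
  | exSO : ℕ → MSO A → MSO A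

namespace MSO

variable {A : Type}

def Sat (T : UTree A) (v : ℕ → Node) (V : ℕ → Set Node) : MSO A → Prop
  | .eq x y => v x = v y
  | .desc x y => T.descR (v x) (v y)
  | .sib x y => T.sibR (v x) (v y)
  | .lab a x => v x ∈ T.dom ∧ T.label (v x) = a
  | .mem X x => v x ∈ V X
  | .not φ => ¬ Sat T v V φ
  | .and φ ψ => Sat T v V φ ∧ Sat T v V ψ
  | .exFO n φ => ∃ s ∈ T.dom, Sat T (Function.update v n s) V φ
  | .exSO n φ => ∃ S : Set Node, S ⊆ ↑T.dom ∧ Sat T v (Function.update V n S) φ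

/-- `φ`, as a sentence, defines the set `L` of trees.  (Quantifying over all
valuations forces the truth value to be independent of the valuation, i.e.
`φ` behaves as a sentence.) -/
def DefinesB (φ : MSO A) (L : Set (UTree A)) : Prop :=
  ∀ (T : UTree A) (v : ℕ → Node) (V : ℕ → Set Node), T ∈ L ↔ Sat T v V φ

/-- `φ`, as a formula whose only free variable is the first-order variable `0`,
defines the unary query `Q`. -/
def DefinesU (φ : MSO A) (Q : UTree A → Set Node) : Prop :=
  ∀ (T : UTree A) (v : ℕ → Node) (V : ℕ → Set Node) (s : Node), s ∈ T.dom →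
    (s ∈ Q T ↔ Sat T (Function.update v 0 s) V φ)

end MSO

/-! ### The modal μ-calculus over trees, with relation symbols drawn from `R`
(and optional backward modalities). Set variables are indexed by ℕ. -/

inductive MuForm (A R : Type) : Type where
  | lab : A → MuForm A R
  | var : ℕ → MuForm A R
  | or : MuForm A R → MuForm A R → MuForm A R
  | not : MuForm A R → MuForm A R
  | dia : R → MuForm A R → MuForm A R        -- ◇(E_r) φ
  | diaB : R → MuForm A R → MuForm A R       -- ◇(E_r⁻) φ (backward modality)
  | mu : ℕ → MuForm A R → MuForm A R

namespace MuForm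

variable {A R : Type}

/-- Polarity check: `pol n φ true` says every free occurrence of the set
variable `n` in `φ` is positive (`false`: negative). -/
def pol (n : ℕ) : MuForm A R → Bool → Prop
  | .lab _, _ => True
  | .var k, b => b = true ∨ k ≠ n
  | .or φ ψ, b => pol n φ b ∧ pol n ψ b
  | .not φ, b => pol n φ (!b)
  | .dia _ φ, b => pol n φ b
  | .diaB _ φ, b => pol n φ b
  | .mu k φ, b => k = n ∨ pol n φ b

/-- Well-formedness: in every subformula `μX.φ`, `X` occurs only positively. -/
def WF : MuForm A R → Prop
  | .lab _ => True
  | .var _ => True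
  | .or φ ψ => WF φ ∧ WF ψ
  | .not φ => WF φ
  | .dia _ φ => WF φ
  | .diaB _ φ => WF φ
  | .mu k φ => pol k φ true ∧ WF φ

/-- `φ` contains no backward modality (plain μ-calculus `L_μ`). -/
def NoBack : MuForm A R → Prop
  | .lab _ => True
  | .var _ => True
  | .or φ ψ => NoBack φ ∧ NoBack ψ
  | .not φ => NoBack φ
  | .dia _ φ => NoBack φ
  | .diaB _ _ => False
  | .mu _ φ => NoBack φ

/-- Semantics: the set of nodes of `T` at which a formula holds, where `rel`
interprets the relation symbols. -/
def sem (T : UTree A) (rel : R → Node → Node → Prop) (V : ℕ → Set Node) :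
    MuForm A R → Set Node
  | .lab a => {s | s ∈ T.dom ∧ T.label s = a}
  | .var n => V n
  | .or φ ψ => sem T rel V φ ∪ sem T rel V ψ
  | .not φ => {s | s ∈ T.dom ∧ s ∉ sem T rel V φ}
  | .dia r φ => {s | s ∈ T.dom ∧ ∃ t : Node, rel r s t ∧ t ∈ sem T rel V φ}
  | .diaB r φ => {s | s ∈ T.dom ∧ ∃ t : Node, rel r t s ∧ t ∈ sem T rel V φ}
  | .mu n φ =>
      {s | ∀ P : Set Node, sem T rel (Function.update V n P) φ ⊆ P → s ∈ P}

end MuForm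

/-- The two relations of statement 6: first child and next sibling. -/
inductive FcNs : Type where
  | fc : FcNs
  | ns : FcNs

def FcNs.rel {A : Type} (T : UTree A) : FcNs → Node → Node → Prop
  | .fc => T.firstChildR
  | .ns => T.nsR

/-! ### First-child/next-sibling structure of a tree domain -/

/-- The first child of a node (which may lie outside the domain). -/
def fc (s : Node) : Node := s ++ [0]

/-- The next sibling of a node (which may lie outside the domain); the value at the root is junk
and is never used. -/
def ns (s : Node) : Node := s.dropLast ++ [s.getLastD 0 + 1]

@[simp] lemma ns_concat (u : Node) (i : ℕ) : ns (u ++ [i]) = u ++ [i + 1] := by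
  simp [ns]

/-- A weight that strictly increases along first-child and next-sibling steps. -/
def weight (s : Node) : ℕ := (s.map (· + 1)).sum

lemma weight_fc (s : Node) : weight s < weight (fc s) := by simp [weight, fc]

lemma weight_ns (s : Node) : weight s < weight (ns s) := by
  rcases List.eq_nil_or_concat s with rfl | ⟨u, i, rfl⟩
  · simp [weight, ns]
  · rw [List.concat_eq_append, ns_concat]; simp [weight]

/-- A strict bound for the weights of the nodes of `T`. -/
def UTree.bound {A : Type} (T : UTree A) : ℕ := T.dom.sup weight + 1

lemma UTree.weight_lt {A : Type} (T : UTree A) {s : Node} (h : s ∈ T.dom) :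
    weight s < T.bound :=
  Nat.lt_succ_of_le (Finset.le_sup (f := weight) h)

/-- `sub s t`: the node `t` lies in the subtree rooted at `s` of the binary tree in which the left
successor is the first child and the right successor is the next sibling.  So `t` is a descendant
of `s` or of a later sibling of `s`. -/
def sub (s t : Node) : Prop :=
  s <+: t ∨ ∃ u i j w, s = u ++ [i] ∧ t = u ++ j :: w ∧ i < j

lemma sub_concat (u : Node) (i : ℕ) (t : Node) :
    sub (u ++ [i]) t ↔ ∃ j w, t = u ++ j :: w ∧ i ≤ j := by
  constructor
  · rintro (⟨w, rfl⟩ | ⟨u', i', j, w, h, rfl, hij⟩)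
    · exact ⟨i, w, by simp, le_rfl⟩
    · obtain ⟨rfl, h2⟩ := List.append_inj' h rfl
      simp only [List.cons.injEq, and_true] at h2
      exact ⟨j, w, rfl, by omega⟩
  · rintro ⟨j, w, rfl, hij⟩
    rcases hij.eq_or_lt with rfl | h
    · exact Or.inl ⟨w, by simp⟩
    · exact Or.inr ⟨u, i, j, w, rfl, rfl, h⟩

lemma sub_fc (s t : Node) : sub (fc s) t ↔ s <+: t ∧ t ≠ s := by
  rw [fc, sub_concat]
  constructor
  · rintro ⟨j, w, rfl, -⟩
    exact ⟨⟨_, rfl⟩, by simp⟩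
  · rintro ⟨⟨w, rfl⟩, h⟩
    cases w with
    | nil => simp at h
    | cons j w => exact ⟨j, w, rfl, Nat.zero_le _⟩

lemma sub_nil (t : Node) : sub [] t := Or.inl List.nil_prefix

lemma sub_refl (s : Node) : sub s s := Or.inl List.prefix_rfl

/-- `strict s t`: the node `t` lies below the left or the right successor of `s` in the binary
tree. -/
def strict (s t : Node) : Prop := sub (fc s) t ∨ (s ≠ [] ∧ sub (ns s) t)

lemma sub_iff (s t : Node) : sub s t ↔ t = s ∨ strict s t := by
  rcases List.eq_nil_or_concat s with rfl | ⟨u, i, rfl⟩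
  · simp only [strict, sub_fc, sub_nil, List.nil_prefix]; tauto
  · rw [List.concat_eq_append, strict, sub_fc, ns_concat, sub_concat, sub_concat]
    constructor
    · rintro ⟨j, w, rfl, hij⟩
      rcases hij.eq_or_lt with rfl | h
      · by_cases hw : w = []
        · exact Or.inl (by simp [hw])
        · exact Or.inr (Or.inl ⟨⟨w, by simp⟩, by simpa using hw⟩)
      · exact Or.inr (Or.inr ⟨by simp, j, w, rfl, h⟩)
    · rintro (rfl | ⟨⟨w, rfl⟩, -⟩ | ⟨-, j, w, rfl, h⟩)
      · exact ⟨i, [], rfl, le_rfl⟩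
      · exact ⟨i, w, by simp, le_rfl⟩
      · exact ⟨j, w, rfl, by omega⟩

lemma sub_of_strict {s t : Node} (h : strict s t) : sub s t := (sub_iff s t).2 (Or.inr h)

lemma not_sub_fc_self (s : Node) : ¬ sub (fc s) s := by simp [sub_fc]

lemma not_sub_ns_of_prefix {s t : Node} (hs : s ≠ []) (h : s <+: t) : ¬ sub (ns s) t := by
  rcases List.eq_nil_or_concat s with rfl | ⟨u, i, rfl⟩
  · exact absurd rfl hs
  · obtain ⟨w, rfl⟩ := h
    rw [List.concat_eq_append, ns_concat, sub_concat]
    rintro ⟨j, w', h, hij⟩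
    simp at h
    omega

lemma not_sub_ns_self {s : Node} (hs : s ≠ []) : ¬ sub (ns s) s :=
  not_sub_ns_of_prefix hs List.prefix_rfl

lemma not_sub_fc_ns {s t : Node} (hs : s ≠ []) (h : sub (fc s) t) : ¬ sub (ns s) t :=
  not_sub_ns_of_prefix hs ((sub_fc s t).1 h).1

/-- A subtree whose root is outside the domain contains no node of the domain. -/
lemma UTree.not_sub {A : Type} (T : UTree A) {s t : Node} (hs : s ∉ T.dom) (ht : t ∈ T.dom) :
    ¬ sub s t := by
  rintro (h | ⟨u, i, j, w, rfl, rfl, h⟩)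
  · exact hs (T.prefix_closed ht h)
  · exact hs (T.sib_closed (T.prefix_closed ht (t := u ++ [j]) ⟨w, by simp⟩) h)

lemma sub_ne_nil {s t : Node} (hs : s ≠ []) (h : sub s t) : t ≠ [] := by
  rintro rfl
  rcases h with h | ⟨u, i, j, w, -, h, -⟩
  · exact hs (List.prefix_nil.1 h)
  · simp at h

/-- Induction along the binary tree, from the missing successors up to the root. -/
lemma UTree.ind {A : Type} (T : UTree A) {P : Node → Prop} (h0 : ∀ s, s ∉ T.dom → P s)
    (h1 : ∀ s, s ∈ T.dom → P (fc s) → (s ≠ [] → P (ns s)) → P s) (s : Node) : P s := by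
  induction hn : T.bound - weight s using Nat.strong_induction_on generalizing s with
  | _ n ih =>
    by_cases hs : s ∈ T.dom
    · have := T.weight_lt hs
      have := weight_fc s
      have := weight_ns s
      exact h1 s hs (ih _ (by omega) _ rfl) fun _ => ih _ (by omega) _ rfl
    · exact h0 s hs

/-! ### Deterministic bottom-up runs -/

open Classical in
/-- The state reached at `s` by the deterministic bottom-up automaton with transition function
`step` on the first-child/next-sibling binary tree of `T` whose nodes carry the letters `b`;
missing successors get the state `init`. -/
noncomputable def run {A B Q : Type} (T : UTree A) (init : Q) (step : Q → B → Q → Q)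
    (b : Node → B) (s : Node) : Q :=
  if _h : s ∈ T.dom then
    step (run T init step b (fc s)) (b s) (if s = [] then init else run T init step b (ns s))
  else init
termination_by T.bound - weight s
decreasing_by
  · have := T.weight_lt _h
    have := weight_fc s
    omega
  · have := T.weight_lt _h
    have := weight_ns s
    omega

section Run

variable {A B Q : Type} (T : UTree A) (init : Q) (step : Q → B → Q → Q)

lemma run_out {b : Node → B} {s : Node} (h : s ∉ T.dom) : run T init step b s = init := by
  rw [run]; simp [h]

open Classical in
lemma run_in {b : Node → B} {s : Node} (h : s ∈ T.dom) :
    run T init step b s = step (run T init step b (fc s)) (b s)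
      (if s = [] then init else run T init step b (ns s)) := by
  rw [run]; simp [h]

/-- The state at `s` depends only on the letters in the subtree of `s`. -/
lemma run_congr {b b' : Node → B} (s : Node)
    (h : ∀ t ∈ T.dom, sub s t → b t = b' t) :
    run T init step b s = run T init step b' s := by
  induction s using T.ind with
  | h0 s hs => rw [run_out T _ _ hs, run_out T _ _ hs]
  | h1 s hs ih1 ih2 =>
    rw [run_in T _ _ hs, run_in T _ _ hs, h s hs (sub_refl s),
      ih1 fun t ht hst => h t ht (sub_of_strict (Or.inl hst))]
    split_ifs with h0
    · rfl
    · rw [ih2 h0 fun t ht hst => h t ht (sub_of_strict (Or.inr ⟨h0, hst⟩))]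

/-- The run of a product automaton is the pair of runs. -/
lemma run_prod {Q' : Type} (init' : Q') (step' : Q' → B → Q' → Q') (b : Node → B) (s : Node) :
    run T (init, init') (fun l a r => (step l.1 a r.1, step' l.2 a r.2)) b s =
      (run T init step b s, run T init' step' b s) := by
  induction s using T.ind with
  | h0 s hs => simp only [run_out T _ _ hs]
  | h1 s hs ih1 ih2 =>
    rw [run_in T _ _ hs, run_in T _ _ hs, run_in T _ _ hs, ih1]
    split_ifs with h0
    · rfl
    · rw [ih2 h0]

end Run

/-! ### Recognizable predicates and their closure properties -/

/-- The letter of `s` in the tree `T` expanded by the sets `W j`: the label of `s`, and for each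
`j` whether `s ∈ W j`. -/
def letter {A ι : Type} (T : UTree A) (W : ι → Set Node) (s : Node) : A × (ι → Prop) :=
  (T.label s, fun j => s ∈ W j)

/-- A property of trees expanded by an `ι`-indexed family of sets of nodes is recognizable if it is
decided by the root state of some finite deterministic bottom-up automaton. -/
def Rec {A ι : Type} (P : UTree A → (ι → Set Node) → Prop) : Prop :=
  ∃ (Q : Type) (_ : Finite Q) (init : Q) (step : Q → A × (ι → Prop) → Q → Q) (acc : Set Q),
    ∀ T W, P T W ↔ run T init step (letter T W) [] ∈ acc

section Rec

variable {A ι : Type} {P P' : UTree A → (ι → Set Node) → Prop}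

lemma Rec.congr (h : Rec P) (hP : ∀ T W, P' T W ↔ P T W) : Rec P' := by
  have : P' = P := by ext T W; exact hP T W
  rwa [this]

/-- A recognizable property only depends on the traces of the sets on the domain. -/
lemma Rec.loc (h : Rec P) (T : UTree A) {W W' : ι → Set Node}
    (hW : ∀ s ∈ T.dom, ∀ j, s ∈ W j ↔ s ∈ W' j) : P T W ↔ P T W' := by
  obtain ⟨Q, _, init, step, acc, h⟩ := h
  rw [h, h, run_congr T init step (b' := letter T W')]
  intro t ht _
  simp only [letter, hW t ht]

lemma Rec.not (h : Rec P) : Rec fun T W => ¬ P T W := by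
  obtain ⟨Q, hQ, init, step, acc, h⟩ := h
  exact ⟨Q, hQ, init, step, accᶜ, fun T W => not_congr (h T W)⟩

lemma Rec.and (h : Rec P) (h' : Rec P') : Rec fun T W => P T W ∧ P' T W := by
  obtain ⟨Q, hQ, init, step, acc, h⟩ := h
  obtain ⟨Q', hQ', init', step', acc', h'⟩ := h'
  refine ⟨Q × Q', inferInstance, (init, init'),
    fun l a r => (step l.1 a r.1, step' l.2 a r.2), acc ×ˢ acc', fun T W => ?_⟩
  rw [run_prod T init step init' step']
  exact and_congr (h T W) (h' T W)

open Classical in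
/-- Projection, by the subset construction: the set automaton computes, at each node `s`, the set
of all states that the given automaton can reach at `s` over all choices of the `k`-th set.  Choices
for the two successors of `s` can be combined because their subtrees are disjoint. -/
lemma Rec.ex (h : Rec P) (k : ι) : Rec fun T W => ∃ S, P T (Function.update W k S) := by
  obtain ⟨Q, hQ, init, step, acc, h⟩ := h
  let step' : Set Q → A × (ι → Prop) → Set Q → Set Q := fun l a r =>
    {q | ∃ ql ∈ l, ∃ qr ∈ r, ∃ p : Prop, step ql (a.1, Function.update a.2 k p) qr = q}
  refine ⟨Set Q, inferInstance, {init}, step', {X | ∃ q ∈ X, q ∈ acc}, fun T W => ?_⟩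
  have hlet : ∀ (S : Set Node) (s : Node), letter T (Function.update W k S) s =
      (T.label s, Function.update (fun j => s ∈ W j) k (s ∈ S)) := by
    intro S s
    simp only [letter, Prod.mk.injEq, true_and]
    funext j
    by_cases hj : j = k
    · subst hj; simp
    · simp [hj]
  have key : ∀ s, run T {init} step' (letter T W) s =
      {q | ∃ S, run T init step (letter T (Function.update W k S)) s = q} := by
    intro s
    induction s using T.ind with
    | h0 s hs => ext q; simp [run_out T _ _ hs, eq_comm]
    | h1 s hs ih1 ih2 =>
      have hr : (if s = [] then {init} else run T {init} step' (letter T W) (ns s)) =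
          {q | ∃ S, (if s = [] then init else
            run T init step (letter T (Function.update W k S)) (ns s)) = q} := by
        split_ifs with h0
        · ext q; simp [eq_comm]
        · exact ih2 h0
      rw [run_in T _ _ hs, ih1, hr]
      ext q
      simp only [step', Set.mem_ofPred_eq]
      constructor
      · rintro ⟨_, ⟨S1, rfl⟩, _, ⟨S2, rfl⟩, p, rfl⟩
        let S : Set Node := {t | (t = s ∧ p) ∨ (t ∈ S1 ∧ sub (fc s) t) ∨
          (t ∈ S2 ∧ s ≠ [] ∧ sub (ns s) t)}
        have hS : (s ∈ S) = p := by
          have := not_sub_fc_self s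
          have := @not_sub_ns_self s
          simp only [S, Set.mem_ofPred_eq, eq_iff_iff]
          tauto
        refine ⟨S, ?_⟩
        rw [run_in T _ _ hs, hlet S s, hS]
        congr 1
        · apply run_congr
          intro t _ hst
          rw [hlet, hlet]
          have h1 : t ≠ s := by rintro rfl; exact not_sub_fc_self _ hst
          have h2 : s ≠ [] → ¬ sub (ns s) t := fun h0 => not_sub_fc_ns h0 hst
          have : (t ∈ S) = (t ∈ S1) := by
            simp only [S, Set.mem_ofPred_eq, eq_iff_iff]; tauto
          rw [this]
        · split_ifs with h0
          · rfl
          · apply run_congr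
            intro t _ hst
            rw [hlet, hlet]
            have h1 : t ≠ s := by rintro rfl; exact not_sub_ns_self h0 hst
            have h2 : ¬ sub (fc s) t := fun h => not_sub_fc_ns h0 h hst
            have : (t ∈ S) = (t ∈ S2) := by
              simp only [S, Set.mem_ofPred_eq, eq_iff_iff]; tauto
            rw [this]
      · rintro ⟨S, rfl⟩
        refine ⟨_, ⟨S, rfl⟩, _, ⟨S, rfl⟩, s ∈ S, ?_⟩
        rw [run_in T _ _ hs, hlet S s]
        rfl
  simp only [key, h, Set.mem_ofPred_eq]
  constructor
  · rintro ⟨S, hS⟩; exact ⟨_, ⟨S, rfl⟩, hS⟩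
  · rintro ⟨_, ⟨S, rfl⟩, hS⟩; exact ⟨S, hS⟩

open Classical in
/-- Whether some node of the tree carries a state from `G` is recognizable. -/
lemma Rec.exists_state {Q : Type} [Finite Q] (init : Q) (step : Q → A × (ι → Prop) → Q → Q)
    (G : Set Q) : Rec fun T W => ∃ s ∈ T.dom, run T init step (letter T W) s ∈ G := by
  let step' : Q × Prop → A × (ι → Prop) → Q × Prop → Q × Prop := fun l a r =>
    (step l.1 a r.1, l.2 ∨ r.2 ∨ step l.1 a r.1 ∈ G)
  refine ⟨Q × Prop, inferInstance, (init, False), step', {x | x.2}, fun T W => ?_⟩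
  have key : ∀ s, run T (init, False) step' (letter T W) s =
      (run T init step (letter T W) s,
        ∃ t ∈ T.dom, sub s t ∧ run T init step (letter T W) t ∈ G) := by
    intro s
    induction s using T.ind with
    | h0 s hs =>
      rw [run_out T _ _ hs, run_out T _ _ hs]
      simp only [Prod.mk.injEq, true_and, eq_iff_iff, false_iff]
      rintro ⟨t, ht, hst, -⟩
      exact T.not_sub hs ht hst
    | h1 s hs ih1 ih2 =>
      have hr : (if s = [] then (init, False) else run T (init, False) step' (letter T W) (ns s)) =
          (if s = [] then init else run T init step (letter T W) (ns s),
            ∃ t ∈ T.dom, (s ≠ [] ∧ sub (ns s) t) ∧ run T init step (letter T W) t ∈ G) := by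
        split_ifs with h0
        · simp [h0]
        · rw [ih2 h0]; simp [h0]
      rw [run_in T _ _ hs, ih1, hr]
      simp only [step', ← run_in T init step hs, Prod.mk.injEq, true_and, eq_iff_iff]
      constructor
      · rintro (⟨t, ht, hst, hG⟩ | ⟨t, ht, hst, hG⟩ | hG)
        · exact ⟨t, ht, sub_of_strict (Or.inl hst), hG⟩
        · exact ⟨t, ht, sub_of_strict (Or.inr hst), hG⟩
        · exact ⟨s, hs, sub_refl s, hG⟩
      · rintro ⟨t, ht, hst, hG⟩
        rcases (sub_iff s t).1 hst with rfl | h | h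
        · exact Or.inr (Or.inr hG)
        · exact Or.inl ⟨t, ht, h, hG⟩
        · exact Or.inr (Or.inl ⟨t, ht, h, hG⟩)
  rw [key]
  simp [sub_nil]

/-! ### Recognizability of the atomic relations -/

lemma Rec.exists_letter (p : A × (ι → Prop) → Prop) :
    Rec fun (T : UTree A) (W : ι → Set Node) => ∃ s ∈ T.dom, p (letter T W s) := by
  refine (Rec.exists_state (Q := Prop) False (fun _ a _ => p a) {x | x}).congr fun T W => ?_
  refine exists_congr fun s => and_congr_right fun hs => ?_
  rw [run_in T _ _ hs]; rfl

lemma Rec.root (k : ι) : Rec fun (_ : UTree A) (W : ι → Set Node) => [] ∈ W k :=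
  ⟨Prop, inferInstance, False, fun _ a _ => a.2 k, {x | x}, fun T W => by
    rw [run_in T _ _ T.nil_mem]; rfl⟩

open Classical in
lemma Rec.desc (x y : ι) : Rec fun (T : UTree A) (W : ι → Set Node) =>
    ∃ s ∈ T.dom, s ∈ W x ∧ ∃ t ∈ T.dom, s <+: t ∧ t ∈ W y := by
  -- First component: `W y` meets the subtree.  Second: the node is in `W x` and `W y` meets the
  -- node or its left subtree, i.e. its set of descendants.
  let step : Prop × Prop → A × (ι → Prop) → Prop × Prop → Prop × Prop := fun l a r =>
    (l.1 ∨ a.2 y ∨ r.1, a.2 x ∧ (a.2 y ∨ l.1))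
  refine (Rec.exists_state (False, False) step {q | q.2}).congr fun T W => ?_
  have key : ∀ s, (run T (False, False) step (letter T W) s).1 ↔
      ∃ t ∈ T.dom, sub s t ∧ t ∈ W y := by
    intro s
    induction s using T.ind with
    | h0 s hs =>
      rw [run_out T _ _ hs]
      simp only [false_iff]
      rintro ⟨t, ht, hst, -⟩
      exact T.not_sub hs ht hst
    | h1 s hs ih1 ih2 =>
      rw [run_in T _ _ hs]
      simp only [step, ih1, letter]
      have hr : (if s = [] then (False, False) else run T (False, False) step (letter T W)
          (ns s)).1 ↔ ∃ t ∈ T.dom, (s ≠ [] ∧ sub (ns s) t) ∧ t ∈ W y := by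
        split_ifs with h0
        · simp [h0]
        · rw [ih2 h0]; simp [h0]
      rw [hr]
      simp only [sub_iff s, strict]
      constructor
      · rintro (⟨t, ht, h1, h2⟩ | h | ⟨t, ht, h1, h2⟩)
        · exact ⟨t, ht, Or.inr (Or.inl h1), h2⟩
        · exact ⟨s, hs, Or.inl rfl, h⟩
        · exact ⟨t, ht, Or.inr (Or.inr h1), h2⟩
      · rintro ⟨t, ht, rfl | h1 | h1, h2⟩
        · exact Or.inr (Or.inl h2)
        · exact Or.inl ⟨t, ht, h1, h2⟩
        · exact Or.inr (Or.inr ⟨t, ht, h1, h2⟩)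
  refine exists_congr fun s => and_congr_right fun hs => ?_
  rw [run_in T _ _ hs]
  simp only [step, Set.mem_ofPred_eq, key, sub_fc, letter]
  refine and_congr_right fun _ => ?_
  constructor
  · rintro ⟨t, ht, h1, h2⟩
    by_cases h : t = s
    · exact Or.inl (h ▸ h2)
    · exact Or.inr ⟨t, ht, ⟨h1, h⟩, h2⟩
  · rintro (h | ⟨t, ht, h1, h2⟩)
    · exact ⟨s, hs, List.prefix_rfl, h⟩
    · exact ⟨t, ht, h1.1, h2⟩

/-- `t` is `s` or a later sibling of `s`; unlike `UTree.sibR`, this relates the root to itself. -/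
def spine (s t : Node) : Prop := t = s ∨ ∃ u i j, s = u ++ [i] ∧ t = u ++ [j] ∧ i < j

lemma spine_iff (s t : Node) : spine s t ↔ t = s ∨ (s ≠ [] ∧ spine (ns s) t) := by
  rcases List.eq_nil_or_concat s with rfl | ⟨u, i, rfl⟩
  · simp [spine]
  · rw [List.concat_eq_append, ns_concat]
    constructor
    · rintro (h | ⟨u', i', j, h, rfl, hij⟩)
      · exact Or.inl h
      · obtain ⟨rfl, h2⟩ := List.append_inj' h rfl
        simp only [List.cons.injEq, and_true] at h2
        subst h2
        refine Or.inr ⟨by simp, ?_⟩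
        rcases (Nat.succ_le_of_lt hij).eq_or_lt with rfl | h
        · exact Or.inl rfl
        · exact Or.inr ⟨u, i + 1, j, rfl, rfl, h⟩
    · rintro (h | ⟨-, rfl | ⟨u', i', j, h, rfl, hij⟩⟩)
      · exact Or.inl h
      · exact Or.inr ⟨u, i, i + 1, rfl, rfl, by omega⟩
      · obtain ⟨rfl, h2⟩ := List.append_inj' h rfl
        simp only [List.cons.injEq, and_true] at h2
        exact Or.inr ⟨u, i, j, rfl, rfl, by omega⟩

lemma sub_of_spine {s t : Node} (h : spine s t) : sub s t := by
  rcases h with rfl | ⟨u, i, j, rfl, rfl, h⟩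
  · exact sub_refl _
  · exact Or.inr ⟨u, i, j, [], rfl, rfl, h⟩

open Classical in
lemma Rec.spine (x y : ι) : Rec fun (T : UTree A) (W : ι → Set Node) =>
    ∃ s ∈ T.dom, s ∈ W x ∧ ∃ t ∈ T.dom, spine s t ∧ t ∈ W y := by
  -- First component: `W y` meets the right spine.  Second: moreover the node is in `W x`.
  let step : Prop × Prop → A × (ι → Prop) → Prop × Prop → Prop × Prop := fun _ a r =>
    (a.2 y ∨ r.1, a.2 x ∧ (a.2 y ∨ r.1))
  refine (Rec.exists_state (False, False) step {q | q.2}).congr fun T W => ?_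
  have key : ∀ s, (run T (False, False) step (letter T W) s).1 ↔
      ∃ t ∈ T.dom, UnrankedTrees.spine s t ∧ t ∈ W y := by
    intro s
    induction s using T.ind with
    | h0 s hs =>
      rw [run_out T _ _ hs]
      simp only [false_iff]
      rintro ⟨t, ht, hst, -⟩
      exact T.not_sub hs ht (sub_of_spine hst)
    | h1 s hs ih1 ih2 =>
      rw [run_in T _ _ hs]
      simp only [step, letter]
      have hr : (if s = [] then (False, False) else run T (False, False) step (letter T W)
          (ns s)).1 ↔ ∃ t ∈ T.dom, (s ≠ [] ∧ UnrankedTrees.spine (ns s) t) ∧ t ∈ W y := by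
        split_ifs with h0
        · simp [h0]
        · rw [ih2 h0]; simp [h0]
      rw [hr]
      simp only [spine_iff s]
      constructor
      · rintro (h | ⟨t, ht, h1, h2⟩)
        · exact ⟨s, hs, Or.inl rfl, h⟩
        · exact ⟨t, ht, Or.inr h1, h2⟩
      · rintro ⟨t, ht, rfl | h1, h2⟩
        · exact Or.inl h2
        · exact Or.inr ⟨t, ht, h1, h2⟩
  refine exists_congr fun s => and_congr_right fun hs => ?_
  rw [← key s, run_in T _ _ hs]
  rfl

/-- Being a singleton (on the domain): nonempty, and not split into two nonempty parts by any
auxiliary set, quantified on a track `f` different from `k`. -/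
lemma Rec.singleton {k f : ι} (hkf : k ≠ f) : Rec fun (T : UTree A) (W : ι → Set Node) =>
    ∃ s ∈ T.dom, ∀ t ∈ T.dom, t ∈ W k ↔ t = s := by
  classical
  have h1 := Rec.exists_letter (A := A) (ι := ι) fun a => a.2 k
  have h2 := Rec.exists_letter (A := A) (ι := ι) fun a => a.2 k ∧ a.2 f
  have h3 := Rec.exists_letter (A := A) (ι := ι) fun a => a.2 k ∧ ¬ a.2 f
  refine (h1.and ((h2.and h3).ex f).not).congr fun T W => ?_
  simp only [letter, Function.update_self, Function.update_of_ne hkf]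
  constructor
  · rintro ⟨s, hs, h⟩
    refine ⟨⟨s, hs, (h s hs).2 rfl⟩, ?_⟩
    rintro ⟨S, ⟨t, ht, h1, h2⟩, ⟨t', ht', h1', h2'⟩⟩
    rw [h t ht] at h1
    rw [h t' ht'] at h1'
    subst h1 h1'
    exact h2' h2
  · rintro ⟨⟨s, hs, h⟩, hS⟩
    refine ⟨s, hs, fun t ht => ⟨fun h' => ?_, fun h' => h' ▸ h⟩⟩
    by_contra hne
    exact hS ⟨{s}, ⟨s, hs, h, rfl⟩, ⟨t, ht, h', hne⟩⟩

end Rec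

/-! ### MSO-definable queries are recognizable -/

/-- Tracks of the expanded trees: one for each first-order variable, one for each set variable, and
one auxiliary track. -/
inductive Track : Type where
  | fo : ℕ → Track
  | so : ℕ → Track
  | aux : Track

/-- The sets coding a valuation; first-order variables become singletons. -/
def encode (v : ℕ → Node) (V : ℕ → Set Node) : Track → Set Node
  | .fo x => {v x}
  | .so X => V X
  | .aux => ∅

lemma encode_update_fo [DecidableEq Track] (v : ℕ → Node) (V : ℕ → Set Node) (n : ℕ) (s : Node) :
    encode (Function.update v n s) V = Function.update (encode v V) (.fo n) {s} := by
  funext j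
  cases j with
  | fo x => by_cases h : x = n <;> simp [encode, h]
  | so X => simp [encode]
  | aux => simp [encode]

lemma encode_update_so [DecidableEq Track] (v : ℕ → Node) (V : ℕ → Set Node) (n : ℕ)
    (S : Set Node) :
    encode v (Function.update V n S) = Function.update (encode v V) (.so n) S := by
  funext j
  cases j with
  | fo x => simp [encode]
  | so X => by_cases h : X = n <;> simp [encode, h]
  | aux => simp [encode]

lemma sibR_iff {A : Type} (T : UTree A) {s t : Node} (hs : s ∈ T.dom) (ht : t ∈ T.dom) :
    T.sibR s t ↔ spine s t ∧ s ≠ [] := by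
  constructor
  · rintro ⟨-, -, u, i, j, rfl, rfl, hij⟩
    refine ⟨?_, by simp⟩
    rcases hij.eq_or_lt with rfl | h
    · exact Or.inl rfl
    · exact Or.inr ⟨u, i, j, rfl, rfl, h⟩
  · rintro ⟨rfl | ⟨u, i, j, rfl, rfl, h⟩, h0⟩
    · rcases List.eq_nil_or_concat t with rfl | ⟨u, i, rfl⟩
      · exact absurd rfl h0
      · rw [List.concat_eq_append] at *
        exact ⟨hs, ht, u, i, i, rfl, rfl, le_rfl⟩
    · exact ⟨hs, ht, u, i, j, rfl, rfl, h.le⟩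

open Classical in
lemma MSO.exists_rec {A : Type} (φ : MSO A) :
    ∃ P : UTree A → (Track → Set Node) → Prop, Rec P ∧
      ∀ T v V, (∀ x, v x ∈ T.dom) → (φ.Sat T v V ↔ P T (encode v V)) := by
  induction φ with
  | eq x y =>
    refine ⟨_, Rec.exists_letter fun a => a.2 (.fo x) ∧ a.2 (.fo y), fun T v V hv => ?_⟩
    simp only [Sat, letter, encode, Set.mem_singleton_iff]
    exact ⟨fun h => ⟨v x, hv x, rfl, h⟩, fun ⟨s, _, h1, h2⟩ => h1 ▸ h2⟩
  | desc x y =>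
    refine ⟨_, Rec.desc (.fo x) (.fo y), fun T v V hv => ?_⟩
    simp only [Sat, encode, Set.mem_singleton_iff, UTree.descR]
    constructor
    · rintro ⟨h1, h2, h3⟩
      exact ⟨_, h1, rfl, _, h2, h3, rfl⟩
    · rintro ⟨_, h1, rfl, _, h2, h3, rfl⟩
      exact ⟨h1, h2, h3⟩
  | sib x y =>
    refine ⟨_, (Rec.spine (.fo x) (.fo y)).and (Rec.root (.fo x)).not, fun T v V hv => ?_⟩
    simp only [Sat, encode, Set.mem_singleton_iff, sibR_iff T (hv x) (hv y)]
    constructor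
    · rintro ⟨h1, h2⟩
      exact ⟨⟨_, hv x, rfl, _, hv y, h1, rfl⟩, Ne.symm h2⟩
    · rintro ⟨⟨_, h1, rfl, _, h2, h3, rfl⟩, h4⟩
      exact ⟨h3, Ne.symm h4⟩
  | lab a x =>
    refine ⟨_, Rec.exists_letter fun b => b.2 (.fo x) ∧ b.1 = a, fun T v V hv => ?_⟩
    simp only [Sat, letter, encode, Set.mem_singleton_iff]
    exact ⟨fun h => ⟨v x, hv x, rfl, h.2⟩, fun ⟨s, _, h1, h2⟩ => ⟨hv x, h1 ▸ h2⟩⟩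
  | mem X x =>
    refine ⟨_, Rec.exists_letter fun b => b.2 (.fo x) ∧ b.2 (.so X), fun T v V hv => ?_⟩
    simp only [Sat, letter, encode, Set.mem_singleton_iff]
    exact ⟨fun h => ⟨v x, hv x, rfl, h⟩, fun ⟨s, _, h1, h2⟩ => h1 ▸ h2⟩
  | not φ ih =>
    obtain ⟨P, hP, h⟩ := ih
    exact ⟨_, hP.not, fun T v V hv => not_congr (h T v V hv)⟩
  | and φ ψ ih1 ih2 =>
    obtain ⟨P, hP, h⟩ := ih1
    obtain ⟨P', hP', h'⟩ := ih2
    exact ⟨_, hP.and hP', fun T v V hv => and_congr (h T v V hv) (h' T v V hv)⟩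
  | exFO n φ ih =>
    obtain ⟨P, hP, h⟩ := ih
    refine ⟨_, (hP.and (Rec.singleton (k := .fo n) (f := .aux) (by simp))).ex (.fo n),
      fun T v V hv => ?_⟩
    have hv' : ∀ s ∈ T.dom, ∀ x, Function.update v n s x ∈ T.dom := by
      intro s hs x
      by_cases hx : x = n
      · subst hx; simpa using hs
      · simpa [hx] using hv x
    simp only [Sat, Function.update_self]
    constructor
    · rintro ⟨s, hs, hφ⟩
      rw [h T _ V (hv' s hs), encode_update_fo] at hφ
      exact ⟨{s}, hφ, s, hs, fun t _ => Iff.rfl⟩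
    · rintro ⟨S, hφ, s, hs, hS⟩
      refine ⟨s, hs, ?_⟩
      rw [h T _ V (hv' s hs), encode_update_fo]
      refine (hP.loc T fun t ht j => ?_).1 hφ
      by_cases hj : j = .fo n
      · subst hj; simpa using hS t ht
      · simp [hj]
  | exSO n φ ih =>
    obtain ⟨P, hP, h⟩ := ih
    refine ⟨_, hP.ex (.so n), fun T v V hv => ?_⟩
    simp only [Sat]
    constructor
    · rintro ⟨S, -, hφ⟩
      rw [h T v _ hv, encode_update_so] at hφ
      exact ⟨S, hφ⟩
    · rintro ⟨S, hφ⟩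
      refine ⟨S ∩ ↑T.dom, Set.inter_subset_right, ?_⟩
      rw [h T v _ hv, encode_update_so]
      refine (hP.loc T fun t ht j => ?_).1 hφ
      by_cases hj : j = .so n
      · subst hj; simp [ht]
      · simp [hj]

/-- An MSO sentence is decided by a finite automaton that reads the labels only. -/
lemma MSO.exists_automaton {A : Type} {φ : MSO A} {L : Set (UTree A)} (h : φ.DefinesB L) :
    ∃ (Q : Type) (_ : Finite Q) (init : Q) (step : Q → A → Q → Q) (acc : Set Q),
      ∀ T, T ∈ L ↔ run T init step T.label [] ∈ acc := by
  obtain ⟨P, ⟨Q, hQ, init, step, acc, hP⟩, hφ⟩ := φ.exists_rec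
  -- All first-order variables are valued at the root, so the letter there has all these bits set,
  -- while all other letters have only zero bits.  The first component of a state assumes zero bits
  -- at the current node, the second one assumes the bits of the root.
  let W0 : Track → Set Node := encode (fun _ => []) (fun _ => ∅)
  let l0 : Track → Prop := fun _ => False
  let l1 : Track → Prop := fun j => [] ∈ W0 j
  refine ⟨Q × Q, inferInstance, (init, init),
    fun l a r => (step l.1 (a, l0) r.1, step l.1 (a, l1) r.1), {x | x.2 ∈ acc}, fun T => ?_⟩
  rw [h T (fun _ => []) (fun _ => ∅), hφ T _ _ fun _ => T.nil_mem, hP]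
  have key : ∀ s, s ≠ [] → (run T (init, init)
      (fun l a r => (step l.1 (a, l0) r.1, step l.1 (a, l1) r.1)) T.label s).1 =
        run T init step (letter T W0) s := by
    intro s
    induction s using T.ind with
    | h0 s hs => intro _; rw [run_out T _ _ hs, run_out T _ _ hs]
    | h1 s hs ih1 ih2 =>
      intro h0
      have hl : letter T W0 s = (T.label s, l0) := by
        simp only [letter, Prod.mk.injEq, true_and]
        funext j
        cases j <;> simp [W0, l0, encode, h0]
      rw [run_in T _ _ hs, run_in T _ _ hs, if_neg h0, if_neg h0, hl]
      simp only
      rw [ih1 (by simp [fc]), ih2 h0 (by simp [ns])]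
  rw [run_in T _ _ T.nil_mem, run_in T _ _ T.nil_mem]
  simp only [Set.mem_ofPred_eq, if_true]
  rw [key _ (by simp [fc])]
  rfl

/-! ### From automata to the μ-calculus -/

namespace MuForm

variable {A R : Type}

/-- The false formula `μX.X`. -/
def ff : MuForm A R := .mu 0 (.var 0)

/-- Conjunction. -/
def conj (φ ψ : MuForm A R) : MuForm A R := .not (.or (.not φ) (.not ψ))

/-- Finite disjunction. -/
def bigOr : List (MuForm A R) → MuForm A R
  | [] => ff
  | φ :: l => .or φ (bigOr l)

/-- The syntactic conditions on a formula with only positive free variables. -/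
def Good (φ : MuForm A R) : Prop := φ.WF ∧ φ.NoBack ∧ ∀ n, φ.pol n true

lemma good_ff : (ff : MuForm A R).Good := by
  simp [Good, ff, WF, NoBack, pol]

lemma Good.conj {φ ψ : MuForm A R} (h1 : φ.Good) (h2 : ψ.Good) : (conj φ ψ).Good :=
  ⟨⟨h1.1, h2.1⟩, ⟨h1.2.1, h2.2.1⟩, fun n => ⟨h1.2.2 n, h2.2.2 n⟩⟩

lemma Good.or {φ ψ : MuForm A R} (h1 : φ.Good) (h2 : ψ.Good) : (MuForm.or φ ψ).Good :=
  ⟨⟨h1.1, h2.1⟩, ⟨h1.2.1, h2.2.1⟩, fun n => ⟨h1.2.2 n, h2.2.2 n⟩⟩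

lemma good_bigOr {l : List (MuForm A R)} (h : ∀ φ ∈ l, φ.Good) : (bigOr l).Good := by
  induction l with
  | nil => exact good_ff
  | cons φ l ih =>
    exact (h φ (by simp)).or (ih fun ψ hψ => h ψ (by simp [hψ]))

section Sem

variable (T : UTree A) (rel : R → Node → Node → Prop) (V : ℕ → Set Node)

lemma mem_sem_ff (s : Node) : s ∉ (ff : MuForm A R).sem T rel V := by
  intro h
  exact h ∅ (by simp [sem])

lemma mem_sem_conj (φ ψ : MuForm A R) (s : Node) :
    s ∈ (conj φ ψ).sem T rel V ↔ s ∈ T.dom ∧ s ∈ φ.sem T rel V ∧ s ∈ ψ.sem T rel V := by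
  simp only [conj, sem, Set.mem_ofPred_eq, Set.mem_union]
  tauto

lemma mem_sem_bigOr (l : List (MuForm A R)) (s : Node) :
    s ∈ (bigOr l).sem T rel V ↔ ∃ φ ∈ l, s ∈ φ.sem T rel V := by
  induction l with
  | nil => simp [bigOr, mem_sem_ff]
  | cons φ l ih => simp [bigOr, sem, ih]

end Sem

variable {Q : Type}

open Classical in
/-- The `r`-successor carries state `p`, where `G p` expresses carrying state `p` and a missing
successor counts as carrying `init`. -/
noncomputable def succ (init : Q) (G : Q → MuForm A R) (r : R) (p : Q) : MuForm A R :=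
  .or (.dia r (G p)) (if p = init then .not (.dia r (.not ff)) else ff)

lemma good_succ (init : Q) {G : Q → MuForm A R} (hG : ∀ p, (G p).Good) (r : R) (p : Q) :
    (succ init G r p).Good := by
  refine Good.or (hG p) ?_
  split_ifs
  · simp [Good, ff, WF, NoBack, pol]
  · exact good_ff

lemma mem_sem_succ (T : UTree A) (rel : R → Node → Node → Prop) (V : ℕ → Set Node)
    (hrel : ∀ r s t, rel r s t → t ∈ T.dom)
    (init : Q) (G : Q → MuForm A R) (r : R) (p : Q) {s : Node} (hs : s ∈ T.dom) :
    s ∈ (succ init G r p).sem T rel V ↔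
      (∃ t, rel r s t ∧ t ∈ (G p).sem T rel V) ∨ (p = init ∧ ∀ t, ¬ rel r s t) := by
  have := mem_sem_ff T rel V
  by_cases hp : p = init
  · simp only [succ, sem, hp, if_true, Set.mem_union, Set.mem_ofPred_eq, hs, true_and, this,
      not_false_eq_true, and_true, not_exists, not_and, eq_self, true_imp_iff]
    refine or_congr_right ⟨fun h t ht => h t ht (hrel r s t ht), fun h t ht => absurd ht (h t)⟩
  · simp [succ, sem, hp, hs, this]

end MuForm

lemma FcNs.rel_mem {A : Type} (T : UTree A) (r : FcNs) (s t : Node) (h : FcNs.rel T r s t) :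
    t ∈ T.dom := by
  cases r <;> exact h.2.1

lemma rel_fc_iff {A : Type} (T : UTree A) {s : Node} (hs : s ∈ T.dom) (t : Node) :
    FcNs.rel T .fc s t ↔ t = fc s ∧ fc s ∈ T.dom := by
  constructor
  · rintro ⟨-, h, rfl⟩; exact ⟨rfl, h⟩
  · rintro ⟨rfl, h⟩; exact ⟨hs, h, rfl⟩

lemma rel_ns_iff {A : Type} (T : UTree A) {s : Node} (hs : s ∈ T.dom) (t : Node) :
    FcNs.rel T .ns s t ↔ t = ns s ∧ s ≠ [] ∧ ns s ∈ T.dom := by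
  constructor
  · rintro ⟨-, h, u, i, rfl, rfl⟩
    rw [ns_concat]
    exact ⟨rfl, by simp, h⟩
  · rintro ⟨rfl, h0, h⟩
    rcases List.eq_nil_or_concat s with rfl | ⟨u, i, rfl⟩
    · exact absurd rfl h0
    · rw [List.concat_eq_append] at *
      exact ⟨hs, h, u, i, rfl, ns_concat u i⟩

section Bekic

variable {A Q : Type} [Fintype A] [Fintype Q] (init : Q) (step : Q → A → Q → Q)

open MuForm

open Classical in
/-- The current node carries state `q`, read off one transition: `G p` expresses carrying
state `p` at the successors. -/
noncomputable def body (q : Q) (G : Q → MuForm A FcNs) : MuForm A FcNs :=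
  bigOr (((Finset.univ : Finset (Q × A × Q)).filter fun x => step x.1 x.2.1 x.2.2 = q).toList.map
    fun x => conj (.lab x.2.1) (conj (succ init G .fc x.1) (succ init G .ns x.2.2)))

lemma good_body (q : Q) {G : Q → MuForm A FcNs} (hG : ∀ p, (G p).Good) :
    (body init step q G).Good := by
  refine good_bigOr fun φ hφ => ?_
  simp only [List.mem_map] at hφ
  obtain ⟨x, -, rfl⟩ := hφ
  refine Good.conj ?_ ((good_succ init hG _ _).conj (good_succ init hG _ _))
  simp [Good, WF, NoBack, pol]

lemma mem_sem_body (T : UTree A) (V : ℕ → Set Node) (q : Q) (G : Q → MuForm A FcNs) (s : Node) :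
    s ∈ (body init step q G).sem T (FcNs.rel T) V ↔ s ∈ T.dom ∧ ∃ q1 q2,
      step q1 (T.label s) q2 = q ∧
      ((fc s ∈ T.dom ∧ fc s ∈ (G q1).sem T (FcNs.rel T) V) ∨ (q1 = init ∧ fc s ∉ T.dom)) ∧
      ((s ≠ [] ∧ ns s ∈ T.dom ∧ ns s ∈ (G q2).sem T (FcNs.rel T) V) ∨
        (q2 = init ∧ ¬ (s ≠ [] ∧ ns s ∈ T.dom))) := by
  simp only [body, mem_sem_bigOr, List.mem_map, Finset.mem_toList, Finset.mem_filter,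
    Finset.mem_univ, true_and, Prod.exists]
  have key : ∀ (q1 : Q) (a : A) (q2 : Q), s ∈ (conj (.lab a) (conj (succ init G .fc q1)
      (succ init G .ns q2))).sem T (FcNs.rel T) V ↔ s ∈ T.dom ∧ T.label s = a ∧
      ((fc s ∈ T.dom ∧ fc s ∈ (G q1).sem T (FcNs.rel T) V) ∨ (q1 = init ∧ fc s ∉ T.dom)) ∧
      ((s ≠ [] ∧ ns s ∈ T.dom ∧ ns s ∈ (G q2).sem T (FcNs.rel T) V) ∨
        (q2 = init ∧ ¬ (s ≠ [] ∧ ns s ∈ T.dom))) := by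
    intro q1 a q2
    by_cases hs : s ∈ T.dom
    · simp only [mem_sem_conj, mem_sem_succ T (FcNs.rel T) V (FcNs.rel_mem T) init G _ _ hs,
        rel_fc_iff T hs, rel_ns_iff T hs, hs, true_and, MuForm.sem, Set.mem_ofPred_eq]
      refine and_congr_right fun _ => and_congr (or_congr ?_ ?_) (or_congr ?_ ?_)
      · exact ⟨fun ⟨t, ⟨h1, h2⟩, h3⟩ => ⟨h2, h1 ▸ h3⟩, fun h => ⟨_, ⟨rfl, h.1⟩, h.2⟩⟩
      · exact and_congr_right fun _ => ⟨fun h h' => h _ ⟨rfl, h'⟩, fun h t ht => h ht.2⟩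
      · exact ⟨fun ⟨t, ⟨h1, h2, h2'⟩, h3⟩ => ⟨h2, h2', h1 ▸ h3⟩,
          fun h => ⟨_, ⟨rfl, h.1, h.2.1⟩, h.2.2⟩⟩
      · exact and_congr_right fun _ => ⟨fun h h' => h _ ⟨rfl, h'⟩, fun h t ht => h ht.2⟩
    · simp [mem_sem_conj, hs]
  constructor
  · rintro ⟨φ, ⟨q1, a, q2, h, rfl⟩, hφ⟩
    obtain ⟨h1, rfl, h2⟩ := (key q1 a q2).1 hφ
    exact ⟨h1, q1, q2, h, h2⟩
  · rintro ⟨h1, q1, q2, h, h2⟩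
    exact ⟨_, ⟨q1, T.label s, q2, h, rfl⟩, (key q1 _ q2).2 ⟨h1, rfl, h2⟩⟩

variable (e : Q → ℕ)

open Classical in
/-- The formula expressing that the current node carries state `q`: the system of fixed point
equations `X_q = body q X` solved by nesting fixed points as in Bekić's principle.  The set `S`
consists of the states whose variable is bound already; `n` bounds the number of the others. -/
noncomputable def stateForm : ℕ → Finset Q → Q → MuForm A FcNs
  | 0, _, q => .var (e q)
  | n + 1, S, q =>
    if q ∈ S then .var (e q) else .mu (e q) (body init step q (stateForm n (insert q S)))

lemma good_stateForm (n : ℕ) (S : Finset Q) (q : Q) : (stateForm init step e n S q).Good := by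
  classical
  induction n generalizing S q with
  | zero => simp [stateForm, Good, WF, NoBack, pol]
  | succ n ih =>
    rw [stateForm]
    split_ifs with h
    · simp [Good, WF, NoBack, pol]
    · have := good_body init step q fun p => ih (insert q S) p
      exact ⟨⟨this.2.2 _, this.1⟩, this.2.1, fun m => Or.inr (this.2.2 m)⟩

lemma stateForm_of_mem (n : ℕ) {S : Finset Q} {q : Q} (h : q ∈ S) :
    stateForm init step e n S q = .var (e q) := by
  cases n with
  | zero => rfl
  | succ n => rw [stateForm, if_pos h]

variable {e}

/-- Soundness: if the free variables are interpreted by sets of nodes carrying the corresponding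
state, the formula holds only at nodes carrying the state `q`. -/
lemma stateForm_sound (he : Function.Injective e) (T : UTree A) (n : ℕ) (S : Finset Q)
    (hn : Fintype.card Q ≤ n + S.card) (V : ℕ → Set Node)
    (hV : ∀ p ∈ S, ∀ s ∈ T.dom, s ∈ V (e p) → run T init step T.label s = p)
    (q : Q) (s : Node) (hs : s ∈ T.dom)
    (h : s ∈ (stateForm init step e n S q).sem T (FcNs.rel T) V) :
    run T init step T.label s = q := by
  classical
  induction n generalizing S V q s with
  | zero =>
    have : S = Finset.univ := Finset.eq_univ_of_card S
      (le_antisymm (Finset.card_le_univ S) (by simpa using hn))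
    exact hV q (by simp [this]) s hs h
  | succ n ih =>
    by_cases hq : q ∈ S
    · rw [stateForm_of_mem init step e _ hq] at h
      exact hV q hq s hs h
    · rw [stateForm, if_neg hq] at h
      refine (h {t | t ∈ T.dom → run T init step T.label t = q} ?_) hs
      intro t ht ht'
      obtain ⟨-, q1, q2, hstep, h1, h2⟩ := (mem_sem_body ..).1 ht
      have hcard : Fintype.card Q ≤ n + (insert q S).card := by
        rw [Finset.card_insert_of_notMem hq]; omega
      have ih' := ih (insert q S) hcard (Function.update V (e q)
          {t | t ∈ T.dom → run T init step T.label t = q}) (by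
        intro p hp s hs hsp
        by_cases hpq : p = q
        · subst hpq
          rw [Function.update_self] at hsp
          exact hsp hs
        · rw [Function.update_of_ne (fun h => hpq (he h))] at hsp
          exact hV p ((Finset.mem_insert.1 hp).resolve_left hpq) s hs hsp)
      have e1 : run T init step T.label (fc t) = q1 := by
        rcases h1 with ⟨hd, h1⟩ | ⟨rfl, hd⟩
        · exact ih' q1 _ hd h1
        · exact run_out T _ _ hd
      rw [run_in T _ _ ht', e1, ← hstep]
      congr 1
      rcases h2 with ⟨h0, hd, h2⟩ | ⟨rfl, hd⟩
      · rw [if_neg h0]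
        exact ih' q2 _ hd h2
      · split_ifs with h0
        · rfl
        · exact run_out T _ _ fun h => hd ⟨h0, h⟩

/-- Completeness: if, strictly below `s`, the free variables hold wherever the corresponding state
is carried, then the formula for the state of `s` holds at `s`.  Only the part strictly below `s`
matters because all recursion variables are guarded by a modality. -/
lemma stateForm_complete (he : Function.Injective e) (T : UTree A) (n : ℕ) (S : Finset Q)
    (hn : Fintype.card Q ≤ n + S.card) (V : ℕ → Set Node) (s : Node) (hs : s ∈ T.dom)
    (hV : ∀ t ∈ T.dom, strict s t → run T init step T.label t ∈ S →
      t ∈ V (e (run T init step T.label t)))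
    (hq : run T init step T.label s ∉ S) :
    s ∈ (stateForm init step e n S (run T init step T.label s)).sem T (FcNs.rel T) V := by
  classical
  induction n generalizing S V s with
  | zero =>
    have : S = Finset.univ := Finset.eq_univ_of_card S
      (le_antisymm (Finset.card_le_univ S) (by simpa using hn))
    simp [this] at hq
  | succ n ih =>
    generalize hqs : run T init step T.label s = q at hq ⊢
    rw [stateForm, if_neg hq]
    intro P hP
    have hcard : Fintype.card Q ≤ n + (insert q S).card := by
      rw [Finset.card_insert_of_notMem hq]; omega
    have key : ∀ t, (∀ t' ∈ T.dom, strict t t' → run T init step T.label t' ∈ S →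
        t' ∈ V (e (run T init step T.label t'))) →
        ∀ t' ∈ T.dom, sub t t' → run T init step T.label t' = q → t' ∈ P := by
      intro t
      induction t using T.ind with
      | h0 t ht => exact fun _ t' ht' h => absurd h (T.not_sub ht ht')
      | h1 t ht ih1 ih2 =>
        intro hV'
        have hbelow : ∀ t' ∈ T.dom, strict t t' → run T init step T.label t' = q → t' ∈ P := by
          rintro t' ht' (h | ⟨h0, h⟩)
          · exact ih1 (fun t'' ht'' h'' => hV' t'' ht'' (Or.inl (sub_of_strict h''))) t' ht' h
          · exact ih2 h0 (fun t'' ht'' h'' => hV' t'' ht'' (Or.inr ⟨h0, sub_of_strict h''⟩))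
              t' ht' h
        have hV2 : ∀ t' ∈ T.dom, strict t t' → run T init step T.label t' ∈ insert q S →
            t' ∈ Function.update V (e q) P (e (run T init step T.label t')) := by
          intro t' ht' hst hmem
          by_cases hpq : run T init step T.label t' = q
          · rw [hpq, Function.update_self]
            exact hbelow t' ht' hst hpq
          · rw [Function.update_of_ne (fun h => hpq (he h))]
            exact hV' t' ht' hst ((Finset.mem_insert.1 hmem).resolve_left hpq)
        -- The formula for the state of a successor holds there, be it a variable or a fixed point.
        have hsucc : ∀ t' ∈ T.dom, strict t t' → (∀ t'', strict t' t'' → strict t t'') →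
            t' ∈ (stateForm init step e n (insert q S) (run T init step T.label t')).sem T
              (FcNs.rel T) (Function.update V (e q) P) := by
          intro t' ht' hst htr
          by_cases hmem : run T init step T.label t' ∈ insert q S
          · rw [stateForm_of_mem init step e _ hmem]
            exact hV2 t' ht' hst hmem
          · exact ih (insert q S) hcard _ t' ht' (fun t'' ht'' h'' => hV2 t'' ht'' (htr _ h'')) hmem
        intro t' ht' hst hq'
        rcases (sub_iff t t').1 hst with rfl | hst
        · apply hP
          rw [mem_sem_body]
          refine ⟨ht', _, _, (run_in T init step ht').symm.trans hq', ?_, ?_⟩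
          · by_cases hd : fc t' ∈ T.dom
            · exact Or.inl ⟨hd, hsucc _ hd (Or.inl (sub_refl _))
                fun t'' h => Or.inl (sub_of_strict h)⟩
            · exact Or.inr ⟨run_out T _ _ hd, hd⟩
          · by_cases h0 : t' = []
            · exact Or.inr ⟨if_pos h0, fun h => h.1 h0⟩
            · rw [if_neg h0]
              by_cases hd : ns t' ∈ T.dom
              · exact Or.inl ⟨h0, hd, hsucc _ hd (Or.inr ⟨h0, sub_refl _⟩)
                  fun t'' h => Or.inr ⟨h0, sub_of_strict h⟩⟩
              · exact Or.inr ⟨run_out T _ _ hd, fun h => hd h.2⟩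
        · exact hbelow t' ht' hst hq'
    exact key s hV s hs (sub_refl s) hqs

/-- The language of a finite automaton is definable in the μ-calculus. -/
lemma exists_muForm (acc : Set Q) : ∃ φ : MuForm A FcNs, φ.WF ∧ φ.NoBack ∧
    ∀ (T : UTree A) (V : ℕ → Set Node),
      run T init step T.label [] ∈ acc ↔ [] ∈ φ.sem T (FcNs.rel T) V := by
  classical
  let e : Q → ℕ := fun q => Fintype.equivFin Q q
  have he : Function.Injective e := fun p q h => (Fintype.equivFin Q).injective (Fin.ext h)
  let φ : MuForm A FcNs := bigOr ((Finset.univ.filter (· ∈ acc)).toList.map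
    (stateForm init step e (Fintype.card Q) ∅))
  have hφ : φ.Good := by
    refine good_bigOr fun ψ hψ => ?_
    obtain ⟨q, -, rfl⟩ := List.mem_map.1 hψ
    exact good_stateForm init step e _ _ q
  refine ⟨φ, hφ.1, hφ.2.1, fun T V => ?_⟩
  simp only [φ, mem_sem_bigOr, List.mem_map, Finset.mem_toList, Finset.mem_filter,
    Finset.mem_univ, true_and]
  constructor
  · intro h
    exact ⟨_, ⟨_, h, rfl⟩, stateForm_complete init step he T _ ∅ (by simp) V [] T.nil_mem
      (by simp) (by simp)⟩
  · rintro ⟨_, ⟨q, hq, rfl⟩, h⟩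
    rwa [stateForm_sound init step he T _ ∅ (by simp) V (by simp) q [] T.nil_mem h]

end Bekic

/-! ### From the μ-calculus to MSO -/

namespace MSO

variable {A : Type}

/-- Disjunction. -/
def or (φ ψ : MSO A) : MSO A := .not (.and (.not φ) (.not ψ))

/-- Implication. -/
def imp (φ ψ : MSO A) : MSO A := .not (.and φ (.not ψ))

/-- First-order universal quantification. -/
def allFO (n : ℕ) (φ : MSO A) : MSO A := .not (.exFO n (.not φ))

/-- Set universal quantification. -/
def allSO (n : ℕ) (φ : MSO A) : MSO A := .not (.exSO n (.not φ))

section Sat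

variable (T : UTree A) (v : ℕ → Node) (V : ℕ → Set Node)

@[simp] lemma sat_or (φ ψ : MSO A) : (or φ ψ).Sat T v V ↔ φ.Sat T v V ∨ ψ.Sat T v V := by
  simp only [or, Sat]; tauto

@[simp] lemma sat_imp (φ ψ : MSO A) : (imp φ ψ).Sat T v V ↔ (φ.Sat T v V → ψ.Sat T v V) := by
  simp only [imp, Sat]; tauto

@[simp] lemma sat_allFO (n : ℕ) (φ : MSO A) :
    (allFO n φ).Sat T v V ↔ ∀ s ∈ T.dom, φ.Sat T (Function.update v n s) V := by
  simp [allFO, Sat]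

@[simp] lemma sat_allSO (n : ℕ) (φ : MSO A) :
    (allSO n φ).Sat T v V ↔
      ∀ S : Set Node, S ⊆ ↑T.dom → φ.Sat T v (Function.update V n S) := by
  simp [allSO, Sat]

end Sat

/-- `x_{k+1}` is the first child, respectively the next sibling, of `x_k`; uses `x_{k+2}` as a bound
variable. -/
def relForm (k : ℕ) : FcNs → MSO A
  | .fc => .and (.and (.desc k (k + 1)) (.not (.eq k (k + 1))))
      (.allFO (k + 2) (.and
        (imp (.and (.desc k (k + 2)) (.desc (k + 2) (k + 1)))
          (or (.eq (k + 2) k) (.eq (k + 2) (k + 1))))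
        (imp (.sib (k + 2) (k + 1)) (.eq (k + 2) (k + 1)))))
  | .ns => .and (.and (.sib k (k + 1)) (.not (.eq k (k + 1))))
      (.allFO (k + 2)
        (imp (.and (.sib k (k + 2)) (.sib (k + 2) (k + 1)))
          (or (.eq (k + 2) k) (.eq (k + 2) (k + 1)))))

lemma sat_relForm (T : UTree A) (v : ℕ → Node) (V : ℕ → Set Node) (k : ℕ) (r : FcNs) :
    (relForm k r).Sat T v V ↔ FcNs.rel T r (v k) (v (k + 1)) := by
  generalize hs : v k = s
  generalize ht : v (k + 1) = t
  cases r with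
  | fc =>
    simp only [relForm, Sat, sat_allFO, sat_imp, sat_or, Function.update_self, FcNs.rel, hs, ht,
      Function.update_of_ne (show k ≠ k + 2 by omega),
      Function.update_of_ne (show k + 1 ≠ k + 2 by omega)]
    constructor
    · rintro ⟨⟨⟨h1, h2, w, rfl⟩, hne⟩, hall⟩
      refine ⟨h1, h2, ?_⟩
      cases w with
      | nil => simp at hne
      | cons i w =>
        have hd : s ++ [i] ∈ T.dom := T.prefix_closed h2 ⟨w, by simp⟩
        have hw : w = [] := by
          have := (hall _ hd).1 ⟨⟨h1, hd, ⟨_, rfl⟩⟩, ⟨hd, h2, ⟨w, by simp⟩⟩⟩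
          simpa [eq_comm] using this
        subst hw
        have hd0 : s ++ [0] ∈ T.dom := by
          rcases Nat.eq_zero_or_pos i with rfl | h
          · exact hd
          · exact T.sib_closed hd h
        exact ((hall _ hd0).2 ⟨hd0, hd, s, 0, i, rfl, rfl, Nat.zero_le _⟩).symm
    · rintro ⟨h1, h2, rfl⟩
      refine ⟨⟨⟨h1, h2, ⟨_, rfl⟩⟩, by simp⟩, fun z hz => ⟨?_, ?_⟩⟩
      · rintro ⟨⟨-, -, w, rfl⟩, ⟨-, -, hw⟩⟩
        rw [List.prefix_append_right_inj] at hw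
        rcases List.prefix_cons_iff.1 hw with rfl | ⟨w', rfl, hw'⟩
        · simp
        · simp [List.prefix_nil.1 hw']
      · rintro ⟨-, -, u, i, j, rfl, h, hij⟩
        obtain ⟨rfl, h'⟩ := List.append_inj' h rfl
        simp only [List.cons.injEq, and_true] at h'
        have : i = 0 := by omega
        rw [this]
  | ns =>
    simp only [relForm, Sat, sat_allFO, sat_imp, sat_or, Function.update_self, FcNs.rel, hs, ht,
      Function.update_of_ne (show k ≠ k + 2 by omega),
      Function.update_of_ne (show k + 1 ≠ k + 2 by omega)]
    constructor
    · rintro ⟨⟨⟨h1, h2, u, i, j, rfl, rfl, hij⟩, hne⟩, hall⟩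
      refine ⟨h1, h2, u, i, rfl, ?_⟩
      have hlt : i < j := lt_of_le_of_ne hij (by rintro rfl; exact hne rfl)
      have hd : u ++ [i + 1] ∈ T.dom := by
        rcases (Nat.succ_le_of_lt hlt).eq_or_lt with rfl | h
        · exact h2
        · exact T.sib_closed h2 h
      have := hall _ hd ⟨⟨h1, hd, u, i, i + 1, rfl, rfl, by omega⟩,
        ⟨hd, h2, u, i + 1, j, rfl, rfl, hlt⟩⟩
      rcases this with h | h
      · simp at h
      · exact h.symm
    · rintro ⟨h1, h2, u, i, rfl, rfl⟩
      refine ⟨⟨⟨h1, h2, u, i, i + 1, rfl, rfl, by omega⟩, by simp⟩, ?_⟩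
      rintro z hz ⟨⟨-, -, u', a, b, h, rfl, hab⟩, ⟨-, -, u'', c, d, h', h'', hcd⟩⟩
      obtain ⟨rfl, e1⟩ := List.append_inj' h rfl
      obtain ⟨rfl, e2⟩ := List.append_inj' h' rfl
      obtain ⟨-, e3⟩ := List.append_inj' h'' rfl
      simp only [List.cons.injEq, and_true] at e1 e2 e3
      have : b = i ∨ b = i + 1 := by omega
      rcases this with rfl | rfl <;> simp

end MSO

/-- The standard translation of the (forward) μ-calculus into MSO, at the node valued by the
first-order variable `k`; set variables keep their indices.  Backward modalities are not
translated. -/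
def MuForm.toMSO {A : Type} : MuForm A FcNs → ℕ → MSO A
  | .lab a, k => .lab a k
  | .var n, k => .mem n k
  | .or φ ψ, k => MSO.or (φ.toMSO k) (ψ.toMSO k)
  | .not φ, k => .not (φ.toMSO k)
  | .dia r φ, k => .exFO (k + 1) (.and (MSO.relForm k r) (φ.toMSO (k + 1)))
  | .diaB _ _, k => .eq k k
  | .mu n φ, k =>
    MSO.allSO n (MSO.imp (MSO.allFO (k + 1) (MSO.imp (φ.toMSO (k + 1)) (.mem n (k + 1))))
      (.mem n k))

/-- Correctness of the translation.  The two valuations of the set variables need to agree on the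
domain only, which absorbs the fact that fixed points range over arbitrary sets of strings. -/
lemma MuForm.sat_toMSO {A : Type} (T : UTree A) (φ : MuForm A FcNs) (hφ : φ.NoBack) (k : ℕ)
    (v : ℕ → Node) (V V' : ℕ → Set Node) (hV : ∀ n, ∀ s ∈ T.dom, s ∈ V n ↔ s ∈ V' n)
    (hv : v k ∈ T.dom) :
    (φ.toMSO k).Sat T v V ↔ v k ∈ φ.sem T (FcNs.rel T) V' := by
  induction φ generalizing k v V V' with
  | lab a => simp [toMSO, MSO.Sat, sem]
  | var n => exact hV n _ hv
  | or φ ψ ih1 ih2 =>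
    simp only [toMSO, MSO.sat_or, sem, Set.mem_union, ih1 hφ.1 k v V V' hV hv,
      ih2 hφ.2 k v V V' hV hv]
  | not φ ih =>
    simp only [toMSO, MSO.Sat, sem, Set.mem_ofPred_eq, hv, true_and, ih hφ k v V V' hV hv]
  | dia r φ ih =>
    simp only [toMSO, MSO.Sat, MSO.sat_relForm, sem, Set.mem_ofPred_eq, hv, true_and,
      Function.update_self, Function.update_of_ne (show k ≠ k + 1 by omega)]
    constructor
    · rintro ⟨t, ht, h1, h2⟩
      refine ⟨t, h1, ?_⟩
      simpa using (ih hφ (k + 1) (Function.update v (k + 1) t) V V' hV (by simpa)).1 h2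
    · rintro ⟨t, h1, h2⟩
      have ht := FcNs.rel_mem T r _ t h1
      exact ⟨t, ht, h1,
        (ih hφ (k + 1) (Function.update v (k + 1) t) V V' hV (by simpa)).2 (by simpa)⟩
  | diaB r φ ih => exact absurd hφ id
  | mu n φ ih =>
    simp only [toMSO, MSO.sat_allSO, MSO.sat_imp, MSO.sat_allFO, MSO.Sat, sem,
      Set.mem_ofPred_eq, Function.update_self]
    have agree : ∀ S P : Set Node, (∀ s ∈ T.dom, s ∈ S ↔ s ∈ P) →
        ∀ m, ∀ s ∈ T.dom, s ∈ Function.update V n S m ↔ s ∈ Function.update V' n P m := by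
      intro S P h m s hs
      by_cases hm : m = n
      · subst hm; simpa using h s hs
      · simpa [hm] using hV m s hs
    have step : ∀ S P : Set Node, (∀ s ∈ T.dom, s ∈ S ↔ s ∈ P) → ∀ t ∈ T.dom,
        ((φ.toMSO (k + 1)).Sat T (Function.update v (k + 1) t) (Function.update V n S) ↔
          t ∈ φ.sem T (FcNs.rel T) (Function.update V' n P)) := by
      intro S P h t ht
      simpa using ih hφ (k + 1) (Function.update v (k + 1) t) _ _ (agree S P h) (by simpa)
    constructor
    · intro h P hP
      have hSP : ∀ s ∈ T.dom, s ∈ P ∩ ↑T.dom ↔ s ∈ P := fun s hs => by simp [hs]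
      refine (h (P ∩ ↑T.dom) Set.inter_subset_right fun t ht hsat => ⟨?_, ht⟩).1
      exact hP ((step _ _ hSP t ht).1 hsat)
    · intro h S _ hS
      -- Enlarging `S` by all strings outside the domain makes it closed under the operator.
      have hSP : ∀ s ∈ T.dom, s ∈ S ↔ s ∈ {s | s ∈ T.dom → s ∈ S} := fun s hs => by simp [hs]
      exact h {s | s ∈ T.dom → s ∈ S} (fun t ht ht' => hS t ht' ((step _ _ hSP t ht').2 ht)) hv

/-- Truth of `φ` at the root: the root is the node without proper ancestors. -/
lemma MuForm.exists_mso {A : Type} {L : Set (UTree A)} (φ : MuForm A FcNs) (hφ : φ.NoBack)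
    (h : ∀ (T : UTree A) (V : ℕ → Set Node), T ∈ L ↔ [] ∈ φ.sem T (FcNs.rel T) V) :
    ∃ ψ : MSO A, ψ.DefinesB L := by
  refine ⟨.exFO 0 (.and (MSO.allFO 1 (MSO.imp (.desc 1 0) (.eq 1 0))) (φ.toMSO 0)),
    fun T v V => ?_⟩
  rw [h T V]
  have key : ∀ s ∈ T.dom, ((φ.toMSO 0).Sat T (Function.update v 0 s) V ↔
      s ∈ φ.sem T (FcNs.rel T) V) := fun s hs => by
    simpa using sat_toMSO T φ hφ 0 (Function.update v 0 s) V V (fun _ _ _ => Iff.rfl) (by simpa)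
  simp only [MSO.Sat, MSO.sat_allFO, MSO.sat_imp, Function.update_self,
    Function.update_of_ne (show (0 : ℕ) ≠ 1 by omega)]
  constructor
  · intro hs
    exact ⟨[], T.nil_mem, fun t _ ht => List.prefix_nil.1 ht.2.2, (key _ T.nil_mem).2 hs⟩
  · rintro ⟨s, hs, h1, h2⟩
    have := h1 [] T.nil_mem ⟨T.nil_mem, hs, List.nil_prefix⟩
    subst this
    exact (key _ hs).1 h2

/-- The Boolean MSO queries on ordered unranked Σ-trees are
precisely the Boolean queries defined by sentences of the μ-calculus
`L_μ[≺_fc, ≺_ns]`, where `φ` defines `{ T : (T, ε) ⊨ φ }`. -/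
theorem mso_iff_mu_calculus (A : Type) [Fintype A] (L : Set (UTree A)) :
    (∃ φ : MSO A, φ.DefinesB L) ↔
      ∃ φ : MuForm A FcNs, φ.WF ∧ φ.NoBack ∧
        ∀ (T : UTree A) (V : ℕ → Set Node),
          T ∈ L ↔ ([] : Node) ∈ φ.sem T (FcNs.rel T) V := by
  constructor
  · rintro ⟨φ, hφ⟩
    obtain ⟨Q, hQ, init, step, acc, h⟩ := MSO.exists_automaton hφ
    have := Fintype.ofFinite Q
    obtain ⟨ψ, h1, h2, h3⟩ := exists_muForm init step acc
    exact ⟨ψ, h1, h2, fun T V => (h T).trans (h3 T V)⟩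
  · rintro ⟨φ, -, hφ, h⟩
    exact φ.exists_mso hφ h

end UnrankedTrees
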